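/- (Crofton's formula on the sphere) Let d ≥ 2 and let γ : [0,1] → S^{d−1} ⊂ ℝ^d be a continuous curve on the unit sphere. Then the spherical length of γ equals π times the average number of intersections of γ with great hyperspheres: Len_S(γ) = π ∫_{S^{d−1}} #{t ∈ [0,1] : ⟨γ(t), v⟩ = 0} dσ(v), as an identity in [0,∞], where σ is the uniform (rotation-invariant) probability measure on S^{d−1} and # denotes cardinality valued in {0,1,2,…} ∪ {∞}. -/

import Mathlib

open Set Filter MeasureTheory
open scoped ENNReal NNReal RealInnerProductSpace

noncomputable section

/-- The parameters `u 0 < u 1 < ⋯ < u m` of a polygon inscribed in (the restriction to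
`[a,b]` of) a curve: strictly increasing parameters lying in `[a,b]`. -/
def InscribedIn (a b : ℝ) (m : ℕ) (u : ℕ → ℝ) : Prop :=
  (∀ i < m, u i < u (i + 1)) ∧ ∀ i ≤ m, u i ∈ Set.Icc a b

/-- The length of the polygon inscribed in the curve `γ` with parameters `u 0, …, u m`:
the sum of the euclidean lengths of its edges. -/
def polyLen {E : Type*} [NormedAddCommGroup E] (γ : ℝ → E) (m : ℕ) (u : ℕ → ℝ) : ℝ :=
  ∑ i ∈ Finset.range m, ‖γ (u (i + 1)) - γ (u i)‖

/-- The (Jordan) length of the arc `γ : [a,b] → E`: the supremum of the lengths of all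
inscribed polygons, valued in `[0,∞]`. -/
def arcLen {E : Type*} [NormedAddCommGroup E] (γ : ℝ → E) (a b : ℝ) : ℝ≥0∞ :=
  ⨆ (m : ℕ) (u : ℕ → ℝ) (_ : InscribedIn a b m u), ENNReal.ofReal (polyLen γ m u)

/-- The list of vertices of the polygon inscribed in `γ` with parameters `u 0, …, u m`. -/
def vertexList {E : Type*} (γ : ℝ → E) (m : ℕ) (u : ℕ → ℝ) : List E :=
  (List.range (m + 1)).map fun i => γ (u i)

/-- Collapse consecutive equal entries of a list to single entries. -/
def collapse {E : Type*} (l : List E) : List E :=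
  @List.destutter E (· ≠ ·) (Classical.decRel _) l

/-- The sum of the turning angles of a polygon given by its list of vertices: at each
interior vertex, the angle in `[0,π]` between the incoming and outgoing edge vectors. -/
def turnSum {E : Type*} [NormedAddCommGroup E] [InnerProductSpace ℝ E] : List E → ℝ
  | a :: b :: c :: l => InnerProductGeometry.angle (b - a) (c - b) + turnSum (b :: c :: l)
  | _ => 0

/-- The sum, at each interior vertex, of the euclidean distance `‖u₊ - u₋‖` between the
unit tangent vectors of the incoming and outgoing edges (so a corner of turning angle θ
contributes `2 sin(θ/2)`). -/
def starSum {E : Type*} [NormedAddCommGroup E] [InnerProductSpace ℝ E] : List E → ℝ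
  | a :: b :: c :: l =>
      ‖(‖c - b‖⁻¹ • (c - b)) - (‖b - a‖⁻¹ • (b - a))‖ + starSum (b :: c :: l)
  | _ => 0

/-- The total curvature of the polygon inscribed in `γ` with parameters `u 0, …, u m`:
after collapsing consecutive equal vertices, the sum of its turning angles. -/
def polyTC {E : Type*} [NormedAddCommGroup E] [InnerProductSpace ℝ E]
    (γ : ℝ → E) (m : ℕ) (u : ℕ → ℝ) : ℝ :=
  turnSum (collapse (vertexList γ m u))

/-- The total curvature of the arc `γ : [a,b] → E`: the supremum over all inscribed
polygons of their total curvature, valued in `[0,∞]`. -/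
def arcTC {E : Type*} [NormedAddCommGroup E] [InnerProductSpace ℝ E]
    (γ : ℝ → E) (a b : ℝ) : ℝ≥0∞ :=
  ⨆ (m : ℕ) (u : ℕ → ℝ) (_ : InscribedIn a b m u), ENNReal.ofReal (polyTC γ m u)

/-- The euclidean total curvature `TC*` of the polygon inscribed in `γ` with parameters
`u 0, …, u m`. -/
def polyTCStar {E : Type*} [NormedAddCommGroup E] [InnerProductSpace ℝ E]
    (γ : ℝ → E) (m : ℕ) (u : ℕ → ℝ) : ℝ :=
  starSum (collapse (vertexList γ m u))

/-- The euclidean total curvature `TC*` of the arc `γ : [a,b] → E`. -/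
def arcTCStar {E : Type*} [NormedAddCommGroup E] [InnerProductSpace ℝ E]
    (γ : ℝ → E) (a b : ℝ) : ℝ≥0∞ :=
  ⨆ (m : ℕ) (u : ℕ → ℝ) (_ : InscribedIn a b m u), ENNReal.ofReal (polyTCStar γ m u)

/-- Cyclically ordered parameters `u 0 < ⋯ < u m` in `[0,1)` of a polygon inscribed in a
loop `γ : ℝ/ℤ → E`. -/
def LoopInscribed (m : ℕ) (u : ℕ → ℝ) : Prop :=
  (∀ i < m, u i < u (i + 1)) ∧ ∀ i ≤ m, u i ∈ Set.Ico (0 : ℝ) 1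

/-- The list of vertices of the polygon inscribed in the loop `γ` with parameters
`u 0, …, u m`. -/
def loopVertexList {E : Type*} (γ : AddCircle (1 : ℝ) → E) (m : ℕ) (u : ℕ → ℝ) : List E :=
  (List.range (m + 1)).map fun i => γ (u i : ℝ)

/-- The sum of the lengths of the successive edges of a list of points. -/
def lenList {E : Type*} [NormedAddCommGroup E] : List E → ℝ
  | a :: b :: l => ‖b - a‖ + lenList (b :: l)
  | _ => 0

/-- The length of the closed polygon inscribed in the loop `γ` with parameters
`u 0, …, u m`: the sum of the edge lengths, indices taken cyclically. -/
def loopPolyLen {E : Type*} [NormedAddCommGroup E]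
    (γ : AddCircle (1 : ℝ) → E) (m : ℕ) (u : ℕ → ℝ) : ℝ :=
  lenList (loopVertexList γ m u ++ (loopVertexList γ m u).take 1)

/-- The length of a loop `γ : ℝ/ℤ → E`: the supremum of the lengths of inscribed closed
polygons, valued in `[0,∞]`. -/
def loopLen {E : Type*} [NormedAddCommGroup E] (γ : AddCircle (1 : ℝ) → E) : ℝ≥0∞ :=
  ⨆ (m : ℕ) (u : ℕ → ℝ) (_ : LoopInscribed m u), ENNReal.ofReal (loopPolyLen γ m u)

open Classical in
/-- Collapse consecutive equal vertices of a *cyclic* list of vertices: collapse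
consecutive duplicates, also across the wrap-around. -/
def cyclicCollapse {E : Type*} (l : List E) : List E :=
  if 2 ≤ (collapse l).length ∧ (collapse l).getLast? = (collapse l).head? then
    (collapse l).dropLast
  else collapse l

/-- The total curvature of the closed polygon inscribed in the loop `γ` with parameters
`u 0, …, u m`: after cyclically collapsing consecutive equal vertices, the sum of the
turning angles at all of its vertices (every vertex of a closed polygon is interior). -/
def loopPolyTC {E : Type*} [NormedAddCommGroup E] [InnerProductSpace ℝ E]
    (γ : AddCircle (1 : ℝ) → E) (m : ℕ) (u : ℕ → ℝ) : ℝ :=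
  turnSum (cyclicCollapse (loopVertexList γ m u) ++
    (cyclicCollapse (loopVertexList γ m u)).take 2)

/-- The total curvature of a loop `γ : ℝ/ℤ → E`: the supremum over all inscribed closed
polygons of their total curvature, valued in `[0,∞]`. -/
def loopTC {E : Type*} [NormedAddCommGroup E] [InnerProductSpace ℝ E]
    (γ : AddCircle (1 : ℝ) → E) : ℝ≥0∞ :=
  ⨆ (m : ℕ) (u : ℕ → ℝ) (_ : LoopInscribed m u), ENNReal.ofReal (loopPolyTC γ m u)

/-- The euclidean total curvature `TC*` of the closed inscribed polygon. -/
def loopPolyTCStar {E : Type*} [NormedAddCommGroup E] [InnerProductSpace ℝ E]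
    (γ : AddCircle (1 : ℝ) → E) (m : ℕ) (u : ℕ → ℝ) : ℝ :=
  starSum (cyclicCollapse (loopVertexList γ m u) ++
    (cyclicCollapse (loopVertexList γ m u)).take 2)

/-- The euclidean total curvature `TC*` of a loop `γ : ℝ/ℤ → E`. -/
def loopTCStar {E : Type*} [NormedAddCommGroup E] [InnerProductSpace ℝ E]
    (γ : AddCircle (1 : ℝ) → E) : ℝ≥0∞ :=
  ⨆ (m : ℕ) (u : ℕ → ℝ) (_ : LoopInscribed m u), ENNReal.ofReal (loopPolyTCStar γ m u)

end

open scoped RealInnerProductSpace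

/-- The spherical length of the polygon inscribed in `γ` with parameters `u 0, …, u m`:
the sum of the geodesic (great-circle) distances between consecutive vertices. -/
noncomputable def sphPolyLen {d : ℕ} (γ : ℝ → EuclideanSpace ℝ (Fin d))
    (m : ℕ) (u : ℕ → ℝ) : ℝ :=
  ∑ i ∈ Finset.range m, Real.arccos ⟪γ (u i), γ (u (i + 1))⟫

/-- The spherical length of a curve `γ : [0,1] → S^{d-1}`: the supremum of the spherical
lengths of all inscribed polygons, valued in `[0,∞]`. -/
noncomputable def sphLen {d : ℕ} (γ : ℝ → EuclideanSpace ℝ (Fin d)) : ℝ≥0∞ :=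
  ⨆ (m : ℕ) (u : ℕ → ℝ) (_ : InscribedIn 0 1 m u), ENNReal.ofReal (sphPolyLen γ m u)

set_option linter.unusedSectionVars false
set_option linter.unusedSimpArgs false

section CroftonAux

open scoped Pointwise

variable {E : Type*} [NormedAddCommGroup E] [InnerProductSpace ℝ E] [FiniteDimensional ℝ E]
  [MeasurableSpace E] [BorelSpace E]

theorem crofton_charFun_radial (σ : Measure E) (hinv : ∀ g : E ≃ₗᵢ[ℝ] E, σ.map g = σ)
    {x y : E} (h : ‖x‖ = ‖y‖) : charFun σ x = charFun σ y := by
  set g : E ≃ₗᵢ[ℝ] E := Submodule.reflection (ℝ ∙ (x - y))ᗮ with hg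
  have hxy : g x = y := Submodule.reflection_sub h
  rw [← hxy]
  conv_rhs => rw [← hinv g]
  rw [charFun_apply, charFun_apply, integral_map]
  · simp
  · exact g.continuous.measurable.aemeasurable
  · exact (by fun_prop : Continuous _).aestronglyMeasurable

theorem crofton_unique (σ ν : Measure E) [IsProbabilityMeasure σ] [IsProbabilityMeasure ν]
    (hσ : ∀ᵐ x ∂σ, ‖x‖ = 1) (hν : ∀ᵐ x ∂ν, ‖x‖ = 1)
    (hinv : ∀ g : E ≃ₗᵢ[ℝ] E, σ.map g = σ) (hinv' : ∀ g : E ≃ₗᵢ[ℝ] E, ν.map g = ν) :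
    σ = ν := by
  apply Measure.ext_of_charFun
  ext x
  have h1 : ∫ y, charFun σ (‖x‖ • y) ∂ν = charFun σ x := by
    have : (fun y => charFun σ (‖x‖ • y)) =ᵐ[ν] fun _ => charFun σ x := by
      filter_upwards [hν] with y hy
      exact crofton_charFun_radial σ hinv (by simp [norm_smul, hy])
    rw [integral_congr_ae this]; simp
  have h2 : ∫ y, charFun ν (‖x‖ • y) ∂σ = charFun ν x := by
    have : (fun y => charFun ν (‖x‖ • y)) =ᵐ[σ] fun _ => charFun ν x := by
      filter_upwards [hσ] with y hy
      exact crofton_charFun_radial ν hinv' (by simp [norm_smul, hy])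
    rw [integral_congr_ae this]; simp
  rw [← h1, ← h2]
  simp only [charFun_apply]
  rw [integral_integral_swap]
  · simp only [inner_smul_right, real_inner_comm]
  · refine Integrable.of_bound (C := 1) ?_ ?_
    · exact (by fun_prop : Continuous _).aestronglyMeasurable
    · refine Eventually.of_forall fun p => ?_
      simp only [Function.uncurry]
      rw [Complex.norm_exp_ofReal_mul_I]

theorem crofton_null [Nontrivial E] (σ : Measure E) [IsProbabilityMeasure σ]
    (hσ : ∀ᵐ x ∂σ, ‖x‖ = 1) (hinv : ∀ g : E ≃ₗᵢ[ℝ] E, σ.map g = σ)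
    (A : Set E) (hA : MeasurableSet A) (hcone : ∀ r : ℝ, 0 < r → ∀ x, r • x ∈ A → x ∈ A)
    (h0 : (volume : Measure E) A = 0) : σ A = 0 := by
  set B : Set E := Metric.ball 0 1
  set μ : Measure E := ((volume : Measure E) B)⁻¹ • (volume : Measure E).restrict B with hμ
  have hB0 : (volume : Measure E) B ≠ 0 := (Metric.measure_ball_pos _ _ one_pos).ne'
  have hBt : (volume : Measure E) B ≠ ∞ := measure_ball_lt_top.ne
  have hac : μ ≪ (volume : Measure E) := 
    (Measure.smul_absolutelyContinuous).trans Measure.absolutelyContinuous_restrict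
  have : IsProbabilityMeasure μ := ⟨by simp [hμ, ENNReal.inv_mul_cancel hB0 hBt]⟩
  set T : E → E := fun x => ‖x‖⁻¹ • x with hT
  have hTm : Measurable T := by fun_prop
  have hne : ∀ᵐ x ∂μ, x ≠ 0 := hac.ae_le (Measure.ae_ne volume 0)
  have : IsProbabilityMeasure (μ.map T) := Measure.isProbabilityMeasure_map hTm.aemeasurable
  have key : σ = μ.map T := by
    refine crofton_unique σ _ hσ ?_ hinv ?_
    · rw [ae_map_iff hTm.aemeasurable (measurableSet_eq_fun (by fun_prop) (by fun_prop))]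
      filter_upwards [hne] with x hx
      simp [hT, norm_smul, hx]
    · intro g
      have hgm : Measurable g := g.continuous.measurable
      have hg : μ.map g = μ := by
        have h := (g.measurePreserving.restrict_preimage 
          (s := B) measurableSet_ball).map_eq
        have h' : g ⁻¹' B = B := by ext x; simp [B]
        rw [h'] at h
        rw [hμ, Measure.map_smul, h]
      rw [Measure.map_map hgm hTm]
      have : g ∘ T = T ∘ g := by ext x; simp [hT]
      rw [this, ← Measure.map_map hTm hgm, hg]
  rw [key, Measure.map_apply hTm hA]
  refine measure_mono_null (t := A ∪ {0}) ?_ (hac (measure_union_null h0 (measure_singleton _)))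
  intro x hx
  by_cases hx0 : x = 0
  · simp [hx0]
  · left
    exact hcone _ (by positivity) x hx

theorem crofton_null_min [Nontrivial E] (σ : Measure E) [IsProbabilityMeasure σ]
    (hσ : ∀ᵐ x ∂σ, ‖x‖ = 1) (hinv : ∀ g : E ≃ₗᵢ[ℝ] E, σ.map g = σ)
    (C : Set E) (h0 : 0 ∉ C) :
    ∀ᵐ v ∂σ, ¬ ((∀ s ∈ C, 0 ≤ ⟪s, v⟫) ∧ ∃ s ∈ C, ⟪s, v⟫ = 0) := by
  set K : Set E := {v | ∀ s ∈ C, 0 ≤ ⟪s, v⟫} with hK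
  have hconv : Convex ℝ K := by
    intro x hx y hy a b ha hb _ s hs
    rw [inner_add_right, inner_smul_right, inner_smul_right]
    have := hx s hs
    have := hy s hs
    positivity
  have hsm : ∀ r : ℝ, 0 < r → r • K = K := by
    intro r hr
    ext x
    rw [mem_smul_set_iff_inv_smul_mem₀ hr.ne']
    simp only [hK, mem_ofPred_eq, inner_smul_right]
    refine forall₂_congr fun s _ => ?_
    rw [mul_nonneg_iff_of_pos_left (by positivity)]
  have hfr : σ (frontier K) = 0 := by
    apply crofton_null σ hσ hinv _ isClosed_frontier.measurableSet
    · intro r hr x hx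
      have : r • frontier K = frontier K := by
        rw [frontier, smul_set_sdiff₀ hr.ne', ← closure_smul₀ , ← interior_smul₀ hr.ne', hsm r hr]
      rw [← this] at hx
      exact (smul_mem_smul_set_iff₀ hr.ne' _ _).1 hx
    · exact hconv.addHaar_frontier _
  rw [ae_iff]
  refine measure_mono_null ?_ hfr
  intro v hv
  simp only [not_not, mem_ofPred_eq] at hv
  obtain ⟨hv, s, hs, hsv⟩ := hv
  refine ⟨subset_closure hv, fun hint => ?_⟩
  have hs0 : s ≠ 0 := fun h => h0 (h ▸ hs)
  have hc : Tendsto (fun ε : ℝ => v - ε • s) (nhdsWithin 0 (Ioi 0)) (nhds v) := by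
    have : Continuous (fun ε : ℝ => v - ε • s) := by fun_prop
    have := (this.tendsto 0).mono_left (nhdsWithin_le_nhds (s := Ioi 0))
    simpa using this
  have h1 := hc.eventually (mem_interior_iff_mem_nhds.1 hint)
  obtain ⟨ε, hε, hε0⟩ := (h1.and self_mem_nhdsWithin).exists
  have := hε s hs
  rw [inner_sub_right, inner_smul_right, hsv, real_inner_self_eq_norm_sq] at this
  have : 0 < ε * ‖s‖ ^ 2 := mul_pos hε0 (by positivity)
  linarith

theorem crofton_null_hyper [Nontrivial E] (σ : Measure E) [IsProbabilityMeasure σ]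
    (hσ : ∀ᵐ x ∂σ, ‖x‖ = 1) (hinv : ∀ g : E ≃ₗᵢ[ℝ] E, σ.map g = σ)
    (a : E) (h0 : a ≠ 0) : ∀ᵐ v ∂σ, ⟪a, v⟫ ≠ 0 := by
  filter_upwards [crofton_null_min σ hσ hinv {a} (by simpa using h0.symm)] with v hv h
  exact hv (by simp [h])

end CroftonAux

theorem crofton_cauchy (G : ℝ → ℝ) (h0 : ∀ x, 0 ≤ G x)
    (hadd : ∀ s t, 0 ≤ s → 0 ≤ t → s + t ≤ Real.pi → G (s + t) = G s + G t)
    (hpi : G Real.pi = 1) (x : ℝ) (hx0 : 0 ≤ x) (hx : x ≤ Real.pi) : G x = x / Real.pi := by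
  have hp := Real.pi_pos
  have hmono : ∀ x y, 0 ≤ x → x ≤ y → y ≤ Real.pi → G x ≤ G y := by
    intro x y hx hxy hy
    have := hadd x (y - x) hx (by linarith) (by linarith)
    rw [add_sub_cancel] at this
    linarith [h0 (y - x)]
  have hz : G 0 = 0 := by
    have := hadd 0 0 le_rfl le_rfl (by simpa using hp.le)
    simp at this; exact this
  have hbound : ∀ n : ℕ, |G x - x / Real.pi| ≤ 1 / ((n : ℝ) + 1) := by
    intro n
    set δ : ℝ := Real.pi / ((n : ℝ) + 1) with hδ
    have hn : (0 : ℝ) < (n : ℝ) + 1 := by positivity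
    have hδ0 : 0 < δ := by positivity
    have hδn : ((n : ℝ) + 1) * δ = Real.pi := by rw [hδ]; field_simp
    have hk : ∀ k : ℕ, k ≤ n + 1 → G (k * δ) = k * G δ := by
      intro k
      induction k with
      | zero => intro _; simp [hz]
      | succ k ih =>
        intro hk
        have h1 : ((k : ℝ) + 1) ≤ (n : ℝ) + 1 := by exact_mod_cast hk
        have h2 : (k : ℝ) * δ + δ ≤ Real.pi := by
          rw [← hδn]; nlinarith
        have h3 := hadd (k * δ) δ (by positivity) hδ0.le h2
        push_cast
        rw [add_mul, one_mul, h3, ih (by omega)]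
        ring
    have hGδ : G δ = 1 / ((n : ℝ) + 1) := by
      have := hk (n + 1) le_rfl
      push_cast at this
      rw [hδn, hpi] at this
      field_simp
      linarith
    have hxe : x / Real.pi = (x / δ) * (1 / ((n : ℝ) + 1)) := by
      rw [hδ]; field_simp
    set k := ⌊x / δ⌋₊ with hkdef
    have hk1 : (k : ℝ) ≤ x / δ := Nat.floor_le (by positivity)
    have hk2 : x / δ < (k : ℝ) + 1 := Nat.lt_floor_add_one _
    have hk1' : (k : ℝ) * δ ≤ x := (le_div_iff₀ hδ0).1 hk1
    have hk2' : x < ((k : ℝ) + 1) * δ := (div_lt_iff₀ hδ0).1 hk2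
    have hε : 0 < 1 / ((n : ℝ) + 1) := by positivity
    by_cases hkn : k + 1 ≤ n + 1
    · have a1 := hmono _ _ (by positivity) hk1' hx
      have a2 : G x ≤ G (((k + 1 : ℕ) : ℝ) * δ) := by
        apply hmono _ _ hx0 (by push_cast; exact hk2'.le)
        rw [← hδn]
        have : ((k + 1 : ℕ) : ℝ) ≤ (n : ℝ) + 1 := by exact_mod_cast hkn
        nlinarith
      rw [hk k (by omega), hGδ] at a1
      rw [hk (k + 1) hkn, hGδ] at a2
      push_cast at a2
      rw [hxe, abs_le]
      constructor <;> nlinarith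
    · have : (n : ℝ) + 1 ≤ k := by exact_mod_cast (by omega : n + 1 ≤ k)
      have : Real.pi ≤ x := by rw [← hδn]; nlinarith
      have : x = Real.pi := le_antisymm hx this
      rw [this, hpi, div_self hp.ne']
      simpa using hε.le
  have hlim : Tendsto (fun n : ℕ => 1 / ((n : ℝ) + 1)) atTop (nhds 0) :=
    tendsto_one_div_add_atTop_nhds_zero_nat
  have := ge_of_tendsto' hlim hbound
  have := abs_nonpos_iff.1 this
  linarith

section CroftonAux2

variable {E : Type*} [NormedAddCommGroup E] [InnerProductSpace ℝ E] [FiniteDimensional ℝ E]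
  [MeasurableSpace E] [BorelSpace E]

theorem crofton_refl (e f : E) (he : ‖e‖ = 1) (hf : ‖f‖ = 1) (hef : ⟪e, f⟫ = 0) (ψ : ℝ) :
    ∃ g : E ≃ₗᵢ[ℝ] E, ∀ φ : ℝ, g (Real.cos φ • e + Real.sin φ • f) =
      Real.cos (2 * ψ - φ) • e + Real.sin (2 * ψ - φ) • f := by
  set w : E := (- Real.sin ψ) • e + Real.cos ψ • f with hw
  have hee : ⟪e, e⟫ = 1 := by rw [real_inner_self_eq_norm_sq, he]; norm_num
  have hff : ⟪f, f⟫ = 1 := by rw [real_inner_self_eq_norm_sq, hf]; norm_num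
  have hfe : ⟪f, e⟫ = 0 := by rw [real_inner_comm, hef]
  have hww : ‖w‖ ^ 2 = 1 := by
    rw [← real_inner_self_eq_norm_sq, hw]
    simp only [inner_add_left, inner_add_right, inner_smul_left, inner_smul_right, hee, hff,
      hef, hfe]
    simp
    nlinarith [Real.sin_sq_add_cos_sq ψ]
  refine ⟨Submodule.reflection (ℝ ∙ w)ᗮ, fun φ => ?_⟩
  have hin : ⟪w, Real.cos φ • e + Real.sin φ • f⟫ = Real.sin (φ - ψ) := by
    rw [hw]
    simp only [inner_add_left, inner_add_right, inner_smul_left, inner_smul_right, hee, hff,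
      hef, hfe]
    simp
    rw [Real.sin_sub]; ring
  rw [Submodule.reflection_orthogonal_apply, Submodule.reflection_singleton_apply, hin]
  simp only [RCLike.ofReal_real_eq_id, id, hww]
  obtain ⟨δ, rfl⟩ : ∃ δ, φ = ψ + δ := ⟨φ - ψ, by ring⟩
  have e1 : ψ + δ - ψ = δ := by ring
  have e2 : 2 * ψ - (ψ + δ) = ψ - δ := by ring
  simp only [e1, e2, hw, Real.cos_add, Real.cos_sub,
    Real.sin_add, Real.sin_sub]
  module

theorem crofton_meas (a b : E) : MeasurableSet {v : E | ⟪a, v⟫ * ⟪b, v⟫ < 0} :=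
  (isOpen_lt (by fun_prop) continuous_const).measurableSet

theorem crofton_angle_plane [Nontrivial E] (σ : Measure E) [IsProbabilityMeasure σ]
    (hσ : ∀ᵐ x ∂σ, ‖x‖ = 1) (hinv : ∀ g : E ≃ₗᵢ[ℝ] E, σ.map g = σ)
    (e f : E) (he : ‖e‖ = 1) (hf : ‖f‖ = 1) (hef : ⟪e, f⟫ = 0) (θ : ℝ) (h0 : 0 ≤ θ)
    (hθ : θ ≤ Real.pi) :
    σ.real {v | ⟪e, v⟫ * ⟪Real.cos θ • e + Real.sin θ • f, v⟫ < 0} = θ / Real.pi := by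
  set c : ℝ → E := fun φ => Real.cos φ • e + Real.sin φ • f with hc
  have hc0 : c 0 = e := by simp [hc]
  have hcpi : c Real.pi = - e := by simp [hc]
  have hee : ⟪e, e⟫ = 1 := by rw [real_inner_self_eq_norm_sq, he]; norm_num
  have hff : ⟪f, f⟫ = 1 := by rw [real_inner_self_eq_norm_sq, hf]; norm_num
  have hfe : ⟪f, e⟫ = 0 := by rw [real_inner_comm, hef]
  have hcne : ∀ φ, c φ ≠ 0 := by
    intro φ h
    have : ⟪c φ, c φ⟫ = 1 := by
      simp only [hc, inner_add_left, inner_add_right, inner_smul_left, inner_smul_right, hee, hff,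
        hef, hfe]
      simp
      nlinarith [Real.sin_sq_add_cos_sq φ]
    rw [h] at this
    simp at this
  have hcae : ∀ φ, ∀ᵐ v ∂σ, ⟪c φ, v⟫ ≠ 0 := fun φ => crofton_null_hyper σ hσ hinv _ (hcne φ)
  set G : ℝ → ℝ := fun φ => σ.real {v | ⟪c 0, v⟫ * ⟪c φ, v⟫ < 0} with hG
  have hG0 : G 0 = 0 := by
    have : {v : E | ⟪c 0, v⟫ * ⟪c 0, v⟫ < 0} = ∅ := by
      ext v; simp [mul_self_nonneg]
    simp [hG, this]
  have hshift : ∀ s t, σ.real {v | ⟪c s, v⟫ * ⟪c (s + t), v⟫ < 0} = G t := by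
    intro s t
    obtain ⟨g, hg⟩ := crofton_refl e f he hf hef ((s + t) / 2)
    have h1 : g (c s) = c t := by
      rw [hc]; simp only; rw [hg]; congr 3 <;> ring
    have h2 : g (c (s + t)) = c 0 := by
      rw [hc]; simp only; rw [hg]; congr 3 <;> ring
    simp only [hG]
    conv_rhs => rw [← hinv g]
    rw [map_measureReal_apply g.continuous.measurable (crofton_meas _ _)]
    congr 1
    ext v
    simp only [mem_preimage, mem_ofPred_eq, ← h1, ← h2, LinearIsometryEquiv.inner_map_map]
    rw [mul_comm]
  have := crofton_cauchy G (fun _ => measureReal_nonneg) ?_ ?_ θ h0 hθ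
  · rw [← this, hG]; simp only [hc0]; rfl
  · intro s t hs ht hst
    rcases hs.eq_or_lt with rfl | hs
    · simp [hG0]
    rcases ht.eq_or_lt with rfl | ht
    · simp [hG0]
    rw [← hshift s t]
    simp only [hG]
    have hsin1 : 0 < Real.sin s := Real.sin_pos_of_pos_of_lt_pi hs (by linarith)
    have hsin2 : 0 < Real.sin t := Real.sin_pos_of_pos_of_lt_pi ht (by linarith)
    have hsin3 : 0 ≤ Real.sin (s + t) := Real.sin_nonneg_of_nonneg_of_le_pi (by linarith) hst
    have hrel : ∀ v, Real.sin (s + t) * ⟪c s, v⟫ =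
        Real.sin t * ⟪c 0, v⟫ + Real.sin s * ⟪c (s + t), v⟫ := by
      intro v
      simp only [hc, inner_add_left, inner_smul_left, Real.sin_add, Real.cos_add]
      simp
      have := Real.sin_sq_add_cos_sq s
      linear_combination (Real.sin t * ⟪e, v⟫) * this
    have hiff : ∀ᵐ v ∂σ, (v ∈ {v | ⟪c 0, v⟫ * ⟪c (s + t), v⟫ < 0} ↔ 
        v ∈ {v | ⟪c 0, v⟫ * ⟪c s, v⟫ < 0} ∪ {v | ⟪c s, v⟫ * ⟪c (s + t), v⟫ < 0}) ∧
        ¬ (v ∈ {v | ⟪c 0, v⟫ * ⟪c s, v⟫ < 0} ∩ {v | ⟪c s, v⟫ * ⟪c (s + t), v⟫ < 0}) := by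
      filter_upwards [hcae 0, hcae s, hcae (s + t)] with v h1 h2 h3
      have hr := hrel v
      simp only [mem_ofPred_eq, mem_union, mem_inter_iff]
      generalize ⟪c 0, v⟫ = x at *
      generalize ⟪c s, v⟫ = y at *
      generalize ⟪c (s + t), v⟫ = z at *
      simp only [mul_neg_iff]
      rcases lt_or_gt_of_ne h1 with h1 | h1 <;> rcases lt_or_gt_of_ne h2 with h2 | h2 <;>
        rcases lt_or_gt_of_ne h3 with h3 | h3 <;>
        simp only [h1, h2, h3, not_lt_of_gt h1, not_lt_of_gt h2, not_lt_of_gt h3, and_true,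
          true_and, and_false, false_and, or_false, false_or, or_true, true_or, not_true,
          not_false_iff, iff_true, iff_false, iff_self, true_iff, false_iff] <;>
        nlinarith [mul_pos hsin1 hsin2]
    have hcg : {v | ⟪c 0, v⟫ * ⟪c (s + t), v⟫ < 0} =ᵐ[σ]
        (({v | ⟪c 0, v⟫ * ⟪c s, v⟫ < 0} ∪ {v | ⟪c s, v⟫ * ⟪c (s + t), v⟫ < 0} : Set E)) := by
      filter_upwards [hiff] with v hv
      exact propext hv.1
    rw [measureReal_congr hcg, measureReal_union₀ (crofton_meas _ _).nullMeasurableSet]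
    rw [AEDisjoint, measure_eq_zero_iff_ae_notMem]
    filter_upwards [hiff] with v hv using hv.2
  · simp only [hG]
    rw [measureReal_congr (t := univ)]
    · simp
    · filter_upwards [hcae 0] with v hv
      apply propext
      change ⟪c 0, v⟫ * ⟪c Real.pi, v⟫ < 0 ↔ True
      rw [hcpi, hc0, inner_neg_left, iff_true]
      rw [hc0] at hv
      have := mul_self_pos.2 hv
      linarith

theorem crofton_angle (hfin : 1 < Module.finrank ℝ E) (σ : Measure E) [IsProbabilityMeasure σ]
    (hσ : ∀ᵐ x ∂σ, ‖x‖ = 1) (hinv : ∀ g : E ≃ₗᵢ[ℝ] E, σ.map g = σ)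
    (a b : E) (ha : ‖a‖ = 1) (hb : ‖b‖ = 1) :
    σ {v | ⟪a, v⟫ * ⟪b, v⟫ < 0} = ENNReal.ofReal (Real.arccos ⟪a, b⟫ / Real.pi) := by
  have : Nontrivial E := Module.nontrivial_of_finrank_pos (R := ℝ) (by omega)
  have haa : ⟪a, a⟫ = 1 := by rw [real_inner_self_eq_norm_sq, ha]; norm_num
  have hbb : ⟪b, b⟫ = 1 := by rw [real_inner_self_eq_norm_sq, hb]; norm_num
  set w : E := b - ⟪a, b⟫ • a with hw
  have haw : ⟪a, w⟫ = 0 := by rw [hw, inner_sub_right, inner_smul_right, haa]; ring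
  have hww : ‖w‖ = Real.sin (Real.arccos ⟪a, b⟫) := by
    rw [Real.sin_arccos]
    symm
    rw [Real.sqrt_eq_iff_eq_sq _ (norm_nonneg _), ← real_inner_self_eq_norm_sq]
    · conv_rhs => rw [hw, inner_sub_left, inner_smul_left]
      rw [← hw, haw, hw, inner_sub_right, inner_smul_right, hbb, real_inner_comm a b]
      simp; ring
    · have := abs_real_inner_le_norm a b
      rw [ha, hb] at this
      have := abs_le.1 this
      nlinarith
  obtain ⟨f, hf, haf, hwf⟩ : ∃ f : E, ‖f‖ = 1 ∧ ⟪a, f⟫ = 0 ∧ w = ‖w‖ • f := by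
    by_cases h : w = 0
    · have hne : (ℝ ∙ a)ᗮ ≠ ⊥ := by
        intro hbot
        rw [Submodule.orthogonal_eq_bot_iff] at hbot
        have h1 := finrank_span_singleton (K := ℝ) (v := a) (by rintro rfl; simp at ha)
        rw [hbot, finrank_top] at h1
        omega
      obtain ⟨x, hx, hx0⟩ := Submodule.exists_mem_ne_zero_of_ne_bot hne
      rw [Submodule.mem_orthogonal_singleton_iff_inner_right] at hx
      exact ⟨‖x‖⁻¹ • x, by simp [norm_smul, hx0], by simp [inner_smul_right, hx], by simp [h]⟩
    · exact ⟨‖w‖⁻¹ • w, by simp [norm_smul, h], by simp [inner_smul_right, haw],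
        by rw [smul_inv_smul₀ (by simpa using h)]⟩
  have hbe : b = Real.cos (Real.arccos ⟪a, b⟫) • a + Real.sin (Real.arccos ⟪a, b⟫) • f := by
    have := abs_real_inner_le_norm a b
    rw [ha, hb, one_mul] at this
    have := abs_le.1 this
    rw [Real.cos_arccos this.1 this.2, ← hww, ← hwf, hw]
    simp
  have key := crofton_angle_plane σ hσ hinv a f ha hf haf (Real.arccos ⟪a, b⟫)
    (Real.arccos_nonneg _) (Real.arccos_le_pi _)
  rw [← hbe] at key
  rw [← key, ofReal_measureReal]

end CroftonAux2

theorem crofton_discrete_ivt (h : ℕ → ℝ) (a b : ℕ) (hab : a ≤ b)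
    (hne : ∀ i, a ≤ i → i ≤ b → h i ≠ 0) (hs : h a * h b < 0) :
    ∃ i, a ≤ i ∧ i < b ∧ h i * h (i + 1) < 0 := by
  induction b, hab using Nat.le_induction with
  | base => nlinarith [mul_self_nonneg (h a)]
  | succ b hab ih =>
    by_cases hb : h a * h b < 0
    · obtain ⟨i, h1, h2, h3⟩ := ih (fun i h1 h2 => hne i h1 (by omega)) hb
      exact ⟨i, h1, by omega, h3⟩
    · refine ⟨b, hab, by omega, ?_⟩
      have h1 := hne a le_rfl (by omega)
      have h2 := hne b hab (by omega)
      have h3 : 0 < h a * h b := lt_of_le_of_ne (not_lt.1 hb) (mul_ne_zero h1 h2).symm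
      have h4 : (h a * h b) * (h a * h (b + 1)) < 0 := mul_neg_of_pos_of_neg h3 hs
      have h5 : 0 < h a * h a := mul_self_pos.2 h1
      by_contra hcon
      have := mul_nonneg h5.le (not_lt.1 hcon)
      nlinarith

theorem crofton_lower (f : ℝ → ℝ) (hf : ContinuousOn f (Icc 0 1)) (m : ℕ) (u : ℕ → ℝ)
    (hu : ∀ i < m, u i < u (i + 1)) (hu' : ∀ i ≤ m, u i ∈ Icc (0 : ℝ) 1) :
    (((Finset.range m).filter (fun i => f (u i) * f (u (i + 1)) < 0)).card : ℕ∞) ≤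
      ({t ∈ Icc (0 : ℝ) 1 | f t = 0}).encard := by
  have hmono : ∀ i j, i ≤ j → j ≤ m → u i ≤ u j := by
    intro i j hij
    induction j, hij using Nat.le_induction with
    | base => intro _; exact le_rfl
    | succ j hij ih => intro hj; exact (ih (by omega)).trans (hu j (by omega)).le
  have hz : ∀ i, ∃ z, i ∈ (Finset.range m).filter (fun i => f (u i) * f (u (i + 1)) < 0) →
      z ∈ Ioo (u i) (u (i + 1)) ∧ f z = 0 := by
    intro i
    by_cases hi : i ∈ (Finset.range m).filter (fun i => f (u i) * f (u (i + 1)) < 0)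
    swap
    · exact ⟨0, fun h => absurd h hi⟩
    obtain ⟨him, hneg⟩ := Finset.mem_filter.1 hi
    rw [Finset.mem_range] at him
    have hle := (hu i him).le
    have hc : ContinuousOn f (Icc (u i) (u (i + 1))) :=
      hf.mono (Icc_subset_Icc (hu' i him.le).1 (hu' (i + 1) him).2)
    rcases mul_neg_iff.1 hneg with ⟨h1, h2⟩ | ⟨h1, h2⟩
    · obtain ⟨z, hz, hz'⟩ := intermediate_value_Ioo' hle hc ⟨h2, h1⟩
      exact ⟨z, fun _ => ⟨hz, hz'⟩⟩
    · obtain ⟨z, hz, hz'⟩ := intermediate_value_Ioo hle hc ⟨h1, h2⟩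
      exact ⟨z, fun _ => ⟨hz, hz'⟩⟩
  choose z hz using hz
  rw [← encard_coe_eq_coe_finsetCard]
  refine encard_le_encard_of_injOn (f := z) ?_ ?_
  · intro i hi
    have him := Finset.mem_range.1 (Finset.mem_filter.1 hi).1
    have := hz i hi
    exact ⟨⟨(hu' i him.le).1.trans this.1.1.le, this.1.2.le.trans (hu' (i + 1) him).2⟩, this.2⟩
  · intro i hi j hj hij
    have him := Finset.mem_range.1 (Finset.mem_filter.1 hi).1
    have hjm := Finset.mem_range.1 (Finset.mem_filter.1 hj).1
    have h1 := (hz i hi).1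
    have h2 := (hz j hj).1
    by_contra hne
    rcases Nat.lt_or_gt_of_ne hne with h | h
    · have := hmono (i + 1) j h hjm.le
      linarith [h1.2, h2.1]
    · have := hmono (j + 1) i h him.le
      linarith [h2.2, h1.1]

theorem crofton_local (f : ℝ → ℝ) (hf : ContinuousOn f (Icc 0 1))
    (hgood : ∀ p q : ℚ, 0 ≤ p → p ≤ q → q ≤ 1 →
      (¬ ((∀ s ∈ Icc (p : ℝ) q, 0 ≤ f s) ∧ ∃ s ∈ Icc (p : ℝ) q, f s = 0)) ∧
      (¬ ((∀ s ∈ Icc (p : ℝ) q, 0 ≤ - f s) ∧ ∃ s ∈ Icc (p : ℝ) q, - f s = 0)))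
    (t : ℝ) (ht : t ∈ Icc (0 : ℝ) 1) (hft : f t = 0) (ε : ℝ) (hε : 0 < ε) :
    ∀ᶠ n : ℕ in atTop, ∃ i < n + 1, |(i : ℝ) / ((n + 1 : ℕ) : ℝ) - t| < ε ∧
      f ((i : ℝ) / ((n + 1 : ℕ) : ℝ)) * f (((i + 1 : ℕ) : ℝ) / ((n + 1 : ℕ) : ℝ)) < 0 := by
  have hrat : ∀ q : ℚ, 0 ≤ q → q ≤ 1 → f q ≠ 0 := by
    intro q h0 h1 h
    apply (hgood q q h0 le_rfl h1).1
    simp [h]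
  have ht0 : t ≠ 0 := fun h => hrat 0 le_rfl zero_le_one (by simpa [← h] using hft)
  have ht1 : t ≠ 1 := fun h => hrat 1 zero_le_one le_rfl (by simpa [← h] using hft)
  have ht0' : 0 < t := lt_of_le_of_ne ht.1 ht0.symm
  have ht1' : t < 1 := lt_of_le_of_ne ht.2 ht1
  obtain ⟨p, hp1, hp2⟩ := exists_rat_btwn (show max 0 (t - ε) < t by simp [ht0', hε])
  obtain ⟨q, hq1, hq2⟩ := exists_rat_btwn (show t < min 1 (t + ε) by simp [ht1', hε])
  obtain ⟨hp0, hpε⟩ := max_lt_iff.1 hp1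
  obtain ⟨hq0, hqε⟩ := lt_min_iff.1 hq2
  have hpq := hgood p q (by exact_mod_cast hp0.le) (by exact_mod_cast (hp2.trans hq1).le)
    (by exact_mod_cast hq0.le)
  obtain ⟨x, hx, hfx⟩ : ∃ x ∈ Icc (p : ℝ) q, f x < 0 := by
    by_contra hcon
    push Not at hcon
    exact hpq.1 ⟨hcon, t, ⟨hp2.le, hq1.le⟩, hft⟩
  obtain ⟨y, hy, hfy⟩ : ∃ y ∈ Icc (p : ℝ) q, 0 < f y := by
    by_contra hcon
    push Not at hcon
    exact hpq.2 ⟨fun s hs => by linarith [hcon s hs], t, ⟨hp2.le, hq1.le⟩, by simp [hft]⟩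
  have hfloor : ∀ z ∈ Icc (p : ℝ) q,
      Tendsto (fun n : ℕ => ((⌊z * ((n + 1 : ℕ) : ℝ)⌋₊ : ℕ) : ℝ) / ((n + 1 : ℕ) : ℝ)) atTop
        (nhdsWithin z (Icc 0 1)) := by
    intro z hz
    have hz0 : 0 ≤ z := hp0.le.trans hz.1
    have hz1 : z ≤ 1 := hz.2.trans hq0.le
    refine tendsto_nhdsWithin_iff.2 ⟨?_, ?_⟩
    · exact (tendsto_nat_floor_mul_div_atTop hz0).comp
        (tendsto_natCast_atTop_atTop.comp (tendsto_add_atTop_nat 1))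
    · refine Eventually.of_forall fun n => ⟨by positivity, ?_⟩
      have hn : (0 : ℝ) < ((n + 1 : ℕ) : ℝ) := by positivity
      rw [div_le_one hn]
      refine (Nat.floor_le (by positivity)).trans ?_
      nlinarith
  have hev : ∀ z ∈ Icc (p : ℝ) q, ∀ᶠ w in nhdsWithin z (Icc 0 1), w ∈ Ioo (t - ε) (t + ε) := by
    intro z hz
    exact nhdsWithin_le_nhds (Ioo_mem_nhds (by linarith [hz.1]) (by linarith [hz.2]))
  have hsub : ∀ z ∈ Icc (p : ℝ) q, z ∈ Icc (0 : ℝ) 1 := fun z hz =>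
    ⟨hp0.le.trans hz.1, hz.2.trans hq0.le⟩
  have hx1 := (hfloor x hx).eventually (hev x hx)
  have hy1 := (hfloor y hy).eventually (hev y hy)
  have hx2 := (hfloor x hx).eventually ((hf x (hsub x hx)).eventually (Iio_mem_nhds hfx))
  have hy2 := (hfloor y hy).eventually ((hf y (hsub y hy)).eventually (Ioi_mem_nhds hfy))
  have hx3 := (hfloor x hx).eventually self_mem_nhdsWithin
  have hy3 := (hfloor y hy).eventually self_mem_nhdsWithin
  filter_upwards [hx1, hy1, hx2, hy2, hx3, hy3] with n hx1 hy1 hx2 hy2 hx3 hy3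
  generalize ⌊x * ((n + 1 : ℕ) : ℝ)⌋₊ = a at *
  generalize ⌊y * ((n + 1 : ℕ) : ℝ)⌋₊ = b at *
  have hn : (0 : ℝ) < ((n + 1 : ℕ) : ℝ) := by positivity
  have hle : ∀ a : ℕ, (a : ℝ) / ((n + 1 : ℕ) : ℝ) ∈ Icc (0 : ℝ) 1 → a ≤ n + 1 := by
    intro a ha
    have := (div_le_one hn).1 ha.2
    exact_mod_cast this
  have hne : ∀ i : ℕ, i ≤ n + 1 → f ((i : ℝ) / ((n + 1 : ℕ) : ℝ)) ≠ 0 := by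
    intro i hi
    have := hrat ((i : ℚ) / ((n + 1 : ℕ) : ℚ)) (by positivity)
      ((div_le_one (by positivity)).2 (by exact_mod_cast hi))
    simpa using this
  have main : ∀ a b : ℕ, a ≤ b → b ≤ n + 1 →
      (a : ℝ) / ((n + 1 : ℕ) : ℝ) ∈ Ioo (t - ε) (t + ε) →
      (b : ℝ) / ((n + 1 : ℕ) : ℝ) ∈ Ioo (t - ε) (t + ε) →
      f ((a : ℝ) / ((n + 1 : ℕ) : ℝ)) * f ((b : ℝ) / ((n + 1 : ℕ) : ℝ)) < 0 →
      ∃ i < n + 1, |(i : ℝ) / ((n + 1 : ℕ) : ℝ) - t| < ε ∧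
      f ((i : ℝ) / ((n + 1 : ℕ) : ℝ)) * f (((i + 1 : ℕ) : ℝ) / ((n + 1 : ℕ) : ℝ)) < 0 := by
    intro a b hab hb ha' hb' hneg
    obtain ⟨i, h1, h2, h3⟩ := crofton_discrete_ivt (fun i => f ((i : ℝ) / ((n + 1 : ℕ) : ℝ))) a b
      hab (fun i _ h => hne i (h.trans hb)) hneg
    refine ⟨i, by omega, ?_, h3⟩
    have h4 : (a : ℝ) / ((n + 1 : ℕ) : ℝ) ≤ (i : ℝ) / ((n + 1 : ℕ) : ℝ) := by gcongr
    have h5 : (i : ℝ) / ((n + 1 : ℕ) : ℝ) ≤ (b : ℝ) / ((n + 1 : ℕ) : ℝ) := by gcongr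
    rw [abs_lt]
    constructor <;> linarith [ha'.1, hb'.2]
  rcases le_total a b with hab | hab
  · exact main a b hab (hle b hy3) hx1 hy1 (mul_neg_of_neg_of_pos hx2 hy2)
  · exact main b a hab (hle a hx3) hy1 hx1 (mul_neg_of_pos_of_neg hy2 hx2)

theorem crofton_upper (f : ℝ → ℝ) (hf : ContinuousOn f (Icc 0 1))
    (hgood : ∀ p q : ℚ, 0 ≤ p → p ≤ q → q ≤ 1 →
      (¬ ((∀ s ∈ Icc (p : ℝ) q, 0 ≤ f s) ∧ ∃ s ∈ Icc (p : ℝ) q, f s = 0)) ∧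
      (¬ ((∀ s ∈ Icc (p : ℝ) q, 0 ≤ - f s) ∧ ∃ s ∈ Icc (p : ℝ) q, - f s = 0))) :
    ((({t ∈ Icc (0 : ℝ) 1 | f t = 0}).encard : ℕ∞) : ℝ≥0∞) ≤
      liminf (fun n : ℕ => ((((Finset.range (n + 1)).filter (fun i : ℕ =>
        f ((i : ℝ) / ((n + 1 : ℕ) : ℝ)) * f (((i + 1 : ℕ) : ℝ) / ((n + 1 : ℕ) : ℝ)) < 0)).card : ℕ) :
          ℝ≥0∞)) atTop := by
  set Z : Set ℝ := {t ∈ Icc (0 : ℝ) 1 | f t = 0} with hZ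
  have hfin : ∀ F : Finset ℝ, (F : Set ℝ) ⊆ Z → (F.card : ℝ≥0∞) ≤
      liminf (fun n : ℕ => ((((Finset.range (n + 1)).filter (fun i : ℕ =>
        f ((i : ℝ) / ((n + 1 : ℕ) : ℝ)) * f (((i + 1 : ℕ) : ℝ) / ((n + 1 : ℕ) : ℝ)) < 0)).card : ℕ) :
          ℝ≥0∞)) atTop := by
    intro F hF
    have hsep : ∀ᶠ ε in nhdsWithin (0 : ℝ) (Ioi 0), ∀ x ∈ F, ∀ y ∈ F, x ≠ y → 2 * ε < |x - y| := by
      refine (Finset.eventually_all F).2 fun x _ => (Finset.eventually_all F).2 fun y _ => ?_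
      by_cases hxy : x = y
      · exact Eventually.of_forall fun _ h => absurd hxy h
      have hpos : 0 < |x - y| / 2 := by
        have := abs_pos.2 (sub_ne_zero.2 hxy); linarith
      have := nhdsWithin_le_nhds (s := Ioi (0 : ℝ)) (Iio_mem_nhds hpos)
      filter_upwards [this] with ε hε _
      have : ε < |x - y| / 2 := hε
      linarith
    obtain ⟨ε, hsep, hε⟩ := (hsep.and self_mem_nhdsWithin).exists
    refine le_liminf_of_le (by isBoundedDefault) ?_
    have hall := (Finset.eventually_all F).2 fun t ht =>
      crofton_local f hf hgood t (hF ht).1 (hF ht).2 ε hε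
    filter_upwards [hall] with n hn
    have hn' : ∀ t, ∃ i : ℕ, t ∈ F → (i < n + 1 ∧ |(i : ℝ) / ((n + 1 : ℕ) : ℝ) - t| < ε ∧
      f ((i : ℝ) / ((n + 1 : ℕ) : ℝ)) * f (((i + 1 : ℕ) : ℝ) / ((n + 1 : ℕ) : ℝ)) < 0) := by
      intro t
      by_cases ht : t ∈ F
      · obtain ⟨i, hi⟩ := hn t ht
        exact ⟨i, fun _ => hi⟩
      · exact ⟨0, fun h => absurd h ht⟩
    choose ι hι using hn'
    have := Finset.card_le_card_of_injOn (s := F) (t := (Finset.range (n + 1)).filter (fun i : ℕ =>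
        f ((i : ℝ) / ((n + 1 : ℕ) : ℝ)) * f (((i + 1 : ℕ) : ℝ) / ((n + 1 : ℕ) : ℝ)) < 0)) ι ?_ ?_
    · exact_mod_cast this
    · intro t ht
      have := hι t ht
      exact Finset.mem_coe.2 (Finset.mem_filter.2 ⟨Finset.mem_range.2 this.1, this.2.2⟩)
    · intro x hx y hy hxy
      by_contra hne
      have h1 := (hι x hx).2.1
      have h2 := (hι y hy).2.1
      rw [hxy] at h1
      have h3 := hsep x hx y hy hne
      rw [abs_lt] at h1 h2
      rcases abs_cases (x - y) with ⟨h, _⟩ | ⟨h, _⟩ <;> rw [h] at h3 <;> linarith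
  by_cases hZf : Z.Finite
  · have := hfin hZf.toFinset (by simp)
    rw [hZf.encard_eq_coe_toFinset_card]
    simpa using this
  · by_contra hcon
    push Not at hcon
    obtain ⟨k, hk⟩ := ENNReal.exists_nat_gt (lt_of_lt_of_le hcon le_top).ne
    obtain ⟨F, hF, hFk⟩ := (Set.Infinite.exists_subset_card_eq hZf k)
    have := hfin F hF
    rw [hFk] at this
    exact absurd this (not_le.2 hk)

theorem crofton_count {d : ℕ} (hd : 2 ≤ d) (γ : ℝ → EuclideanSpace ℝ (Fin d))
    (hsph : ∀ t ∈ Set.Icc (0 : ℝ) 1, ‖γ t‖ = 1)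
    (σ : Measure (EuclideanSpace ℝ (Fin d))) [IsProbabilityMeasure σ]
    (hσ : ∀ᵐ x ∂σ, ‖x‖ = 1)
    (hinv : ∀ g : EuclideanSpace ℝ (Fin d) ≃ₗᵢ[ℝ] EuclideanSpace ℝ (Fin d), σ.map g = σ)
    (m : ℕ) (u : ℕ → ℝ) (hu : InscribedIn 0 1 m u) :
    ENNReal.ofReal (sphPolyLen γ m u) = ENNReal.ofReal Real.pi *
      ∫⁻ v, ((((Finset.range m).filter
        (fun i => ⟪γ (u i), v⟫ * ⟪γ (u (i + 1)), v⟫ < 0)).card : ℕ) : ℝ≥0∞) ∂σ := by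
  have h1 : ∀ v : EuclideanSpace ℝ (Fin d), ((((Finset.range m).filter
        (fun i => ⟪γ (u i), v⟫ * ⟪γ (u (i + 1)), v⟫ < 0)).card : ℕ) : ℝ≥0∞) =
      ∑ i ∈ Finset.range m,
        ({v | ⟪γ (u i), v⟫ * ⟪γ (u (i + 1)), v⟫ < 0}).indicator (fun _ => (1 : ℝ≥0∞)) v := by
    intro v
    rw [Finset.card_filter]
    push_cast
    refine Finset.sum_congr rfl fun i _ => ?_
    simp [Set.indicator_apply]
  simp_rw [h1]
  rw [lintegral_finsetSum _ fun i _ => measurable_const.indicator (crofton_meas _ _)]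
  have h2 : ∀ i ∈ Finset.range m, ∫⁻ v, ({v | ⟪γ (u i), v⟫ * ⟪γ (u (i + 1)), v⟫ < 0}).indicator
      (fun _ => (1 : ℝ≥0∞)) v ∂σ =
      ENNReal.ofReal (Real.arccos ⟪γ (u i), γ (u (i + 1))⟫ / Real.pi) := by
    intro i hi
    have hi := Finset.mem_range.1 hi
    rw [lintegral_indicator_const (crofton_meas _ _), one_mul]
    exact crofton_angle (by simp; omega) σ hσ hinv _ _ (hsph _ (hu.2 i hi.le))
      (hsph _ (hu.2 (i + 1) hi))
  rw [Finset.sum_congr rfl h2, ← ENNReal.ofReal_sum_of_nonneg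
    (fun i _ => div_nonneg (Real.arccos_nonneg _) Real.pi_pos.le),
    ← ENNReal.ofReal_mul Real.pi_pos.le, ← Finset.sum_div, mul_div_cancel₀ _ Real.pi_pos.ne']
  rfl

/-- Crofton's formula on the sphere: the spherical length of a continuous
curve on `S^{d-1}` equals `π` times the average number of its intersections with great
hyperspheres, the average taken with respect to the uniform (rotation-invariant)
probability measure `σ` on `S^{d-1}`. -/
theorem crofton_sphere (d : ℕ) (hd : 2 ≤ d) (γ : ℝ → EuclideanSpace ℝ (Fin d))
    (hγ : ContinuousOn γ (Set.Icc 0 1)) (hsph : ∀ t ∈ Set.Icc (0 : ℝ) 1, ‖γ t‖ = 1)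
    (σ : MeasureTheory.Measure (EuclideanSpace ℝ (Fin d)))
    [MeasureTheory.IsProbabilityMeasure σ]
    (hsupp : σ (Metric.sphere (0 : EuclideanSpace ℝ (Fin d)) 1)ᶜ = 0)
    (hinv : ∀ g : EuclideanSpace ℝ (Fin d) ≃ₗᵢ[ℝ] EuclideanSpace ℝ (Fin d),
      σ.map g = σ) :
    sphLen γ = ENNReal.ofReal Real.pi *
      ∫⁻ v, (({t ∈ Set.Icc (0 : ℝ) 1 | ⟪γ t, v⟫ = 0}).encard : ℝ≥0∞) ∂σ := by
  have hσ : ∀ᵐ x ∂σ, ‖x‖ = 1 := by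
    rw [ae_iff]
    refine measure_mono_null (fun x hx => ?_) hsupp
    simpa using hx
  have : Nontrivial (EuclideanSpace ℝ (Fin d)) :=
    Module.nontrivial_of_finrank_pos (R := ℝ) (by simp; omega)
  have hcont : ∀ v : EuclideanSpace ℝ (Fin d), ContinuousOn (fun t => ⟪γ t, v⟫) (Set.Icc 0 1) :=
    fun v => hγ.inner continuousOn_const
  apply le_antisymm
  · refine iSup_le fun m => iSup_le fun u => iSup_le fun hu => ?_
    rw [crofton_count hd γ hsph σ hσ hinv m u hu]
    gcongr with v
    have := crofton_lower (fun t => ⟪γ t, v⟫) (hcont v) m u hu.1 hu.2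
    have := ENat.toENNReal_le.2 this
    simpa using this
  · have hpart : ∀ n : ℕ, InscribedIn 0 1 (n + 1) (fun i : ℕ => (i : ℝ) / ((n + 1 : ℕ) : ℝ)) := by
      intro n
      have hn : (0 : ℝ) < ((n + 1 : ℕ) : ℝ) := by positivity
      refine ⟨fun i _ => ?_, fun i hi => ⟨by positivity, ?_⟩⟩
      · simp only
        gcongr
        simp
      · rw [div_le_one hn]
        exact_mod_cast hi
    have hgood : ∀ᵐ v ∂σ, ∀ p q : ℚ, 0 ≤ p → p ≤ q → q ≤ 1 →
        (¬ ((∀ s ∈ Icc (p : ℝ) q, 0 ≤ ⟪γ s, v⟫) ∧ ∃ s ∈ Icc (p : ℝ) q, ⟪γ s, v⟫ = 0)) ∧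
        (¬ ((∀ s ∈ Icc (p : ℝ) q, 0 ≤ - ⟪γ s, v⟫) ∧ ∃ s ∈ Icc (p : ℝ) q, - ⟪γ s, v⟫ = 0)) := by
      refine ae_all_iff.2 fun p => ae_all_iff.2 fun q => ?_
      by_cases hpq : 0 ≤ p ∧ q ≤ 1
      swap
      · exact Eventually.of_forall fun v h1 _ h2 => absurd ⟨h1, h2⟩ hpq
      have hne : ∀ s ∈ Icc (p : ℝ) q, γ s ≠ 0 := by
        intro s hs h
        have := hsph s ⟨le_trans (by exact_mod_cast hpq.1) hs.1,
          hs.2.trans (by exact_mod_cast hpq.2)⟩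
        simp [h] at this
      have h1 := crofton_null_min σ hσ hinv (γ '' Icc (p : ℝ) q) (by
        rintro ⟨s, hs, h⟩; exact hne s hs h)
      have h2 := crofton_null_min σ hσ hinv ((fun s => - γ s) '' Icc (p : ℝ) q) (by
        rintro ⟨s, hs, h⟩; exact hne s hs (neg_eq_zero.1 h))
      filter_upwards [h1, h2] with v h1 h2 _ _ _
      simp only [forall_mem_image, exists_mem_image, inner_neg_left] at h1 h2
      exact ⟨h1, h2⟩
    set N : ℕ → EuclideanSpace ℝ (Fin d) → ℝ≥0∞ := fun n v =>
      ((((Finset.range (n + 1)).filter (fun i : ℕ => ⟪γ ((i : ℝ) / ((n + 1 : ℕ) : ℝ)), v⟫ *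
        ⟪γ (((i + 1 : ℕ) : ℝ) / ((n + 1 : ℕ) : ℝ)), v⟫ < 0)).card : ℕ) : ℝ≥0∞) with hN
    have hNm : ∀ n, Measurable (N n) := by
      intro n
      simp only [hN, Finset.card_filter]
      push_cast
      refine Finset.measurable_fun_sum _ fun i _ => ?_
      exact Measurable.ite (crofton_meas _ _) measurable_const measurable_const
    have hNint : ∀ n, ENNReal.ofReal Real.pi * ∫⁻ v, N n v ∂σ ≤ sphLen γ := by
      intro n
      rw [← crofton_count hd γ hsph σ hσ hinv (n + 1) _ (hpart n)]
      exact le_iSup_of_le (n + 1) (le_iSup_of_le _ (le_iSup_of_le (hpart n) le_rfl))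
    have hpi0 : ENNReal.ofReal Real.pi ≠ 0 := by simp [Real.pi_pos]
    rw [mul_comm, ← ENNReal.le_div_iff_mul_le (Or.inl hpi0) (Or.inl ENNReal.ofReal_ne_top)]
    calc _ ≤ ∫⁻ v, liminf (fun n => N n v) atTop ∂σ := by
          apply lintegral_mono_ae
          filter_upwards [hgood] with v hv
          exact crofton_upper (fun t => ⟪γ t, v⟫) (hcont v) hv
      _ ≤ liminf (fun n => ∫⁻ v, N n v ∂σ) atTop := lintegral_liminf_le hNm
      _ ≤ sphLen γ / ENNReal.ofReal Real.pi := by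
          refine (liminf_le_liminf (v := fun _ => sphLen γ / ENNReal.ofReal Real.pi)
            (Eventually.of_forall fun n => ?_)).trans_eq (liminf_const _)
          rw [ENNReal.le_div_iff_mul_le (Or.inl hpi0) (Or.inl ENNReal.ofReal_ne_top), mul_comm]
          exact hNint n
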